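/- Let D ⊆ ℂⁿ be a domain, let z ∈ D, and let (a_j)_{j=1}^∞ be a countable sequence of points of D. Then there exist a holomorphic map φ : 𝔻 → D and points λ_j ∈ 𝔻 such that φ(0) = z and φ(λ_j) = a_j for every j ≥ 1. In particular, the set of competitors in the definition of the Lempert function with countably many poles is always nonempty. -/

import Mathlib

open Metric Set Function

/-!
Join `z, a 0, a 1, …` inside `D` by one sequence of points `P k` whose consecutive distances are
small compared with the distance `δ` to the boundary of `D`. Let `κ` be holomorphic on a strip about
the real axis, with `κ 0 = 1`, with `κ k = 0` at all other integers, with translates that satisfy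
`∑ κ (w - k) = 1`, and with decay `4 ^ (-|k|)`. Then `f w = ∑ κ (w - k) P k` is holomorphic on the
strip and `f k = P k`. As `δ` is `1`-Lipschitz, `P (m + k)` stays within `η * δ (P m) * 2 ^ |k|` of
`P m`, so the decay of `κ` wins: for `w` near the integer `m`, the value `f w` lies in the ball of
radius `δ (P m)` about `P m`, hence in `D`. A conformal map of the disc onto the strip turns `f`
into the required disc. For `κ` one takes `exp (-z ^ 2) * (sin (π z) / (π z)) ^ 2`, divided by the
sum of its integer translates, which has no zero near the real axis.
-/

section Chains

variable {α : Type*} {R : α → α → Prop}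

/-- One step of a walker that traverses finite chains one after the other. The state `(x, l, j)`
records the current point `x`, the points `l` still ahead on the current chain, and the number `j`
of the stop at which this chain ends; from there, `path j` leads to the next stop. -/
def walkStep (path : ℕ → List α) : α × List α × ℕ → α × List α × ℕ
  | (_, y :: l, j) => (y, l, j)
  | (x, [], j) => (x, path j, j + 1)

/-- The state `(x, l, j)` of the walker lies on an itinerary with stops `b`: the points ahead
continue `x` to a chain that ends at the stop `b j`. -/
def IsOnItinerary (R : α → α → Prop) (b : ℕ → α) (s : α × List α × ℕ) : Prop :=
  List.IsChain R (s.1 :: s.2.1) ∧ (s.1 :: s.2.1).getLast (List.cons_ne_nil _ _) = b s.2.2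

theorem IsOnItinerary.walkStep {path : ℕ → List α} {b : ℕ → α}
    (hpath : ∀ j, IsOnItinerary R b (b j, path j, j + 1)) :
    ∀ {s}, IsOnItinerary R b s → IsOnItinerary R b (walkStep path s)
  | (_, _ :: _, _), h => ⟨h.1.tail, h.2⟩
  | (x, [], j), h => by obtain rfl : x = b j := h.2; exact hpath j

theorem IsOnItinerary.rel_walkStep (hrefl : ∀ x, R x x) (path : ℕ → List α) {b : ℕ → α} :
    ∀ {s}, IsOnItinerary R b s → R s.1 (_root_.walkStep path s).1
  | (_, _ :: _, _), h => h.1.rel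
  | (x, [], _), _ => hrefl x

theorem exists_iterate_walkStep_eq (path : ℕ → List α) (j : ℕ) (l : List α) (x : α) :
    ∃ n, (walkStep path)^[n] (x, l, j) = ((x :: l).getLast (List.cons_ne_nil x l), [], j) := by
  induction l generalizing x with
  | nil => exact ⟨0, rfl⟩
  | cons y l ih =>
    obtain ⟨n, hn⟩ := ih y
    exact ⟨n + 1, hn⟩

theorem exists_seq_rel_succ_visiting (hrefl : ∀ x, R x x) {b : ℕ → α}
    (hb : ∀ j, Relation.ReflTransGen R (b j) (b (j + 1))) :
    ∃ p : ℕ → α, p 0 = b 0 ∧ (∀ k, R (p k) (p (k + 1))) ∧ range b ⊆ range p := by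
  choose path hpath using fun j ↦ List.exists_isChain_cons_of_relationReflTransGen (hb j)
  let state (k : ℕ) : α × List α × ℕ := (walkStep path)^[k] (b 0, [], 0)
  have state_succ (k : ℕ) : state (k + 1) = walkStep path (state k) := iterate_succ_apply' ..
  have onItinerary (k : ℕ) : IsOnItinerary R b (state k) := by
    induction k with
    | zero => exact ⟨.singleton _, rfl⟩
    | succ k ih => exact state_succ k ▸ ih.walkStep hpath
  have visits (j : ℕ) : ∃ n, state n = (b j, [], j) := by
    induction j with
    | zero => exact ⟨0, rfl⟩
    | succ j ih =>
      obtain ⟨n, hn⟩ := ih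
      obtain ⟨m, hm⟩ := exists_iterate_walkStep_eq path (j + 1) (path j) (b j)
      refine ⟨m + (n + 1), ?_⟩
      calc state (m + (n + 1)) = (walkStep path)^[m] (state (n + 1)) := iterate_add_apply ..
        _ = (walkStep path)^[m] (b j, path j, j + 1) := by rw [state_succ, hn, walkStep]
        _ = (b (j + 1), [], j + 1) := by rw [hm, (hpath j).2]
  refine ⟨fun k ↦ (state k).1, rfl, fun k ↦ ?_, ?_⟩
  · simpa only [state_succ] using (onItinerary k).rel_walkStep hrefl path
  · rintro _ ⟨j, rfl⟩
    obtain ⟨n, hn⟩ := visits j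
    exact ⟨n, congrArg Prod.fst hn⟩

theorem reflTransGen_of_eventually_rel {X : Type*} [TopologicalSpace X] [PreconnectedSpace X]
    {R : X → X → Prop} (hR : ∀ x, ∀ᶠ y in nhds x, R x y ∧ R y x) (x y : X) :
    Relation.ReflTransGen R x y :=
  PreconnectedSpace.induction₂' _
    (fun x ↦ (hR x).mono fun _ h ↦ ⟨.single h.1, .single h.2⟩) ⟨fun _ _ _ ↦ .trans⟩ x y

end Chains

section ShortSteps

variable {X : Type*} [PseudoMetricSpace X] {δ : X → ℝ} {η : ℝ}

/-- The step from `x` to `y` is shorter, by the factor `η`, than the length scales `δ x` and `δ y`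
at its endpoints. Below, `δ` is the radius of a ball that stays inside a given domain. -/
def IsShortStep (δ : X → ℝ) (η : ℝ) (x y : X) : Prop :=
  dist x y ≤ η * min (δ x) (δ y)

theorem IsShortStep.symm {x y : X} (h : IsShortStep δ η x y) : IsShortStep δ η y x := by
  rwa [IsShortStep, dist_comm, min_comm]

theorem IsShortStep.refl (hη : 0 ≤ η) {x : X} (hx : 0 ≤ δ x) : IsShortStep δ η x x := by
  simpa [IsShortStep] using mul_nonneg hη hx

theorem IsShortStep.dist_le (hη : 0 ≤ η) {x y : X} (h : IsShortStep δ η x y) :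
    dist x y ≤ η * δ x :=
  h.trans (by gcongr; exact min_le_left _ _)

theorem eventually_isShortStep (hδ : Continuous δ) (hη : 0 < η) {x : X} (hx : 0 < δ x) :
    ∀ᶠ y in nhds x, IsShortStep δ η x y := by
  have hlt : dist x x < η * min (δ x) (δ x) := by simpa using mul_pos hη hx
  exact (ContinuousAt.eventually_lt (by fun_prop) (by fun_prop) hlt).mono fun _ ↦ le_of_lt

theorem exists_seq_isShortStep_visiting [PreconnectedSpace X] (hδ : Continuous δ)
    (hpos : ∀ x, 0 < δ x) (hη : 0 < η) (b : ℕ → X) :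
    ∃ p : ℕ → X, p 0 = b 0 ∧ (∀ k, IsShortStep δ η (p k) (p (k + 1))) ∧ range b ⊆ range p :=
  exists_seq_rel_succ_visiting (fun x ↦ .refl hη.le (hpos x).le) fun _ ↦
    reflTransGen_of_eventually_rel (fun x ↦
      (eventually_isShortStep hδ hη (hpos x)).mono fun _ h ↦ ⟨h, h.symm⟩) _ _

theorem IsShortStep.dist_le_two_pow_sub_one (hδ : LipschitzWith 1 δ) (hη₀ : 0 ≤ η) (hη₁ : η ≤ 1)
    {p : ℕ → X} (hp : ∀ k, IsShortStep δ η (p k) (p (k + 1))) (n : ℕ) :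
    dist (p n) (p 0) ≤ η * δ (p 0) * (2 ^ n - 1) := by
  induction n with
  | zero => simp
  | succ n ih =>
    have hδn : δ (p n) ≤ δ (p 0) + dist (p n) (p 0) := by
      simpa using hδ.le_add_mul (p n) (p 0)
    calc dist (p (n + 1)) (p 0) ≤ dist (p n) (p (n + 1)) + dist (p n) (p 0) :=
          dist_triangle_left ..
      _ ≤ η * δ (p n) + dist (p n) (p 0) := by gcongr; exact (hp n).dist_le hη₀
      _ ≤ η * (δ (p 0) + dist (p n) (p 0)) + dist (p n) (p 0) := by gcongr
      _ ≤ η * δ (p 0) + 2 * dist (p n) (p 0) := by nlinarith [dist_nonneg (x := p n) (y := p 0)]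
      _ ≤ η * δ (p 0) + 2 * (η * δ (p 0) * (2 ^ n - 1)) := by gcongr
      _ = η * δ (p 0) * (2 ^ (n + 1) - 1) := by ring

theorem IsShortStep.dist_le_two_pow_natAbs (hδ : LipschitzWith 1 δ) (hδ₀ : ∀ x, 0 ≤ δ x)
    (hη₀ : 0 ≤ η) (hη₁ : η ≤ 1) {p : ℤ → X} (hp : ∀ k, IsShortStep δ η (p k) (p (k + 1)))
    (m k : ℤ) : dist (p (k + m)) (p m) ≤ η * δ (p m) * 2 ^ k.natAbs := by
  suffices dist (p (k + m)) (p m) ≤ η * δ (p m) * (2 ^ k.natAbs - 1) from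
    this.trans (by have := hδ₀ (p m); gcongr; linarith)
  obtain ⟨n, rfl | rfl⟩ := k.eq_nat_or_neg
  · simpa using dist_le_two_pow_sub_one hδ hη₀ hη₁ (p := fun i : ℕ ↦ p (i + m))
      (fun i ↦ by simpa [add_right_comm] using hp (i + m)) n
  · simpa using dist_le_two_pow_sub_one hδ hη₀ hη₁ (p := fun i : ℕ ↦ p (-i + m))
      (fun i ↦ by
        have h := (hp (-(i + 1 : ℕ) + m)).symm
        rwa [show -((i + 1 : ℕ) : ℤ) + m + 1 = -i + m by push_cast; ring] at h) n

theorem IsShortStep.comp_toNat (hη : 0 ≤ η) (hδ₀ : ∀ x, 0 ≤ δ x) {p : ℕ → X}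
    (hp : ∀ k, IsShortStep δ η (p k) (p (k + 1))) (k : ℤ) :
    IsShortStep δ η (p k.toNat) (p (k + 1).toNat) := by
  obtain hk | hk := lt_or_ge k 0
  · rw [Int.toNat_of_nonpos hk.le, Int.toNat_of_nonpos hk]
    exact .refl hη (hδ₀ _)
  · rw [Int.toNat_add hk zero_le_one]
    exact hp _

theorem exists_lipschitzWith_one_ball_subset {D : Set X} (hD : IsOpen D) :
    ∃ δ : X → ℝ, LipschitzWith 1 δ ∧ ∀ x ∈ D, 0 < δ x ∧ ball x (δ x) ⊆ D := by
  obtain h | h := Dᶜ.eq_empty_or_nonempty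
  · obtain rfl := compl_empty_iff.mp h
    exact ⟨fun _ ↦ 1, LipschitzWith.const' 1, by simp⟩
  · refine ⟨(infDist · Dᶜ), lipschitz_infDist_pt _, fun x hx ↦ ⟨?_, ball_infDist_compl_subset⟩⟩
    exact (hD.isClosed_compl.notMem_iff_infDist_pos h).mp (not_not.mpr hx)

theorem exists_int_seq_visiting {D : Set X} (hD : IsOpen D) (hconn : IsPreconnected D)
    (hη₀ : 0 < η) (hη₁ : η ≤ 1) {b : ℕ → X} (hb : ∀ j, b j ∈ D) :
    ∃ (P : ℤ → X) (r : ℤ → ℝ), P 0 = b 0 ∧ (∀ m, 0 < r m) ∧ (∀ m, ball (P m) (r m) ⊆ D) ∧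
      (∀ m k, dist (P (k + m)) (P m) ≤ η * r m * 2 ^ k.natAbs) ∧ ∀ j, ∃ k, P k = b j := by
  have := isPreconnected_iff_preconnectedSpace.mp hconn
  obtain ⟨δ, hδ, hδD⟩ := exists_lipschitzWith_one_ball_subset hD
  have hδ' : LipschitzWith 1 fun x : D ↦ δ x := fun x y ↦ hδ x y
  have hpos (x : D) : 0 < δ x := (hδD x x.2).1
  obtain ⟨p, hp₀, hp, hvisit⟩ :=
    exists_seq_isShortStep_visiting hδ'.continuous hpos hη₀ fun j ↦ (⟨b j, hb j⟩ : D)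
  have hstep := IsShortStep.comp_toNat hη₀.le (fun x ↦ (hpos x).le) hp
  refine ⟨fun k ↦ p k.toNat, fun k ↦ δ (p k.toNat), congrArg Subtype.val hp₀, fun m ↦ hpos _,
    fun m ↦ (hδD _ (p m.toNat).2).2,
    IsShortStep.dist_le_two_pow_natAbs hδ' (fun x ↦ (hpos x).le) hη₀.le hη₁ hstep, fun j ↦ ?_⟩
  obtain ⟨n, hn⟩ := hvisit (mem_range_self j)
  exact ⟨n, congrArg Subtype.val hn⟩

end ShortSteps

section Sinc

/-- The entire function `sin z / z`, with its removable singularity filled in. -/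
noncomputable def complexSinc : ℂ → ℂ := dslope Complex.sin 0

theorem differentiable_complexSinc : Differentiable ℂ complexSinc := by
  rw [← differentiableOn_univ]
  exact (Complex.differentiableOn_dslope Filter.univ_mem).mpr
    Complex.differentiable_sin.differentiableOn

theorem mul_complexSinc (z : ℂ) : z * complexSinc z = Complex.sin z := by
  simpa [complexSinc] using sub_smul_dslope Complex.sin 0 z

theorem complexSinc_zero : complexSinc 0 = 1 := by
  simp [complexSinc]

theorem complexSinc_ofReal (x : ℝ) : complexSinc x = Real.sinc x := by
  obtain rfl | hx := eq_or_ne x 0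
  · simp [complexSinc_zero]
  · rw [Real.sinc_of_ne_zero hx, Complex.ofReal_div, eq_div_iff (by exact_mod_cast hx), mul_comm,
      mul_complexSinc, Complex.ofReal_sin]

theorem norm_cos_le_exp_abs_im (z : ℂ) : ‖Complex.cos z‖ ≤ Real.exp |z.im| := by
  have h₁ : ‖Complex.exp (z * Complex.I)‖ ≤ Real.exp |z.im| := by
    simpa [Complex.norm_exp] using neg_le_abs z.im
  have h₂ : ‖Complex.exp (-z * Complex.I)‖ ≤ Real.exp |z.im| := by
    simpa [Complex.norm_exp] using le_abs_self z.im
  rw [Complex.cos, norm_div, Complex.norm_ofNat]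
  linarith [norm_add_le (Complex.exp (z * Complex.I)) (Complex.exp (-z * Complex.I))]

theorem norm_complexSinc_le_exp_abs_im (z : ℂ) : ‖complexSinc z‖ ≤ Real.exp |z.im| := by
  obtain rfl | hz := eq_or_ne z 0
  · simp [complexSinc_zero]
  have hconv : Convex ℝ (Complex.im ⁻¹' Icc (-|z.im|) |z.im|) :=
    (convex_Icc _ _).linear_preimage Complex.imLm
  have hsin : ‖Complex.sin z - Complex.sin 0‖ ≤ Real.exp |z.im| * ‖z - 0‖ :=
    hconv.norm_image_sub_le_of_norm_deriv_le (fun w _ ↦ Complex.differentiable_sin w)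
      (fun w hw ↦ by
        rw [Complex.deriv_sin]
        exact (norm_cos_le_exp_abs_im w).trans (Real.exp_le_exp.mpr (abs_le.mpr hw)))
      (by simp) (abs_le.mp le_rfl)
  rw [Complex.sin_zero, sub_zero, sub_zero, ← mul_complexSinc, norm_mul, mul_comm] at hsin
  exact le_of_mul_le_mul_right hsin (norm_pos_iff.mpr hz)

theorem sinc_pi_mul_intCast {k : ℤ} (hk : k ≠ 0) : Real.sinc (Real.pi * k) = 0 := by
  rw [Real.sinc_of_ne_zero (by simp [Real.pi_ne_zero, hk]), mul_comm Real.pi, Real.sin_int_mul_pi,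
    zero_div]

theorem sinc_ne_zero_of_abs_lt_pi {x : ℝ} (hx : |x| < Real.pi) : Real.sinc x ≠ 0 := by
  obtain rfl | h := eq_or_ne x 0
  · simp
  · rw [Real.sinc_of_ne_zero h]
    obtain ⟨h₁, h₂⟩ := abs_lt.mp hx
    exact div_ne_zero (mt (Real.sin_eq_zero_iff_of_lt_of_lt h₁ h₂).mp h) h

end Sinc

section DiscStrip

/-- The horizontal strip of half-width `τ` about the real axis. -/
def strip (τ : ℝ) : Set ℂ := {w | |w.im| < τ}

/-- The part of `strip τ` over the interval `(-1, 1)`; its integer translates cover the strip. -/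
def stripBox (τ : ℝ) : Set ℂ := {w ∈ strip τ | |w.re| < 1}

theorem isOpen_strip (τ : ℝ) : IsOpen (strip τ) :=
  isOpen_lt Complex.continuous_im.abs continuous_const

theorem isOpen_stripBox (τ : ℝ) : IsOpen (stripBox τ) :=
  (isOpen_strip τ).inter (isOpen_lt Complex.continuous_re.abs continuous_const)

theorem stripBox_subset_strip (τ : ℝ) : stripBox τ ⊆ strip τ := fun _ ↦ And.left

theorem strip_subset_strip {σ τ : ℝ} (h : σ ≤ τ) : strip σ ⊆ strip τ := fun _ hw ↦ hw.trans_le h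

theorem stripBox_subset_stripBox {σ τ : ℝ} (h : σ ≤ τ) : stripBox σ ⊆ stripBox τ :=
  fun _ hw ↦ ⟨strip_subset_strip h hw.1, hw.2⟩

theorem sub_intCast_mem_strip {τ : ℝ} {w : ℂ} (hw : w ∈ strip τ) (k : ℤ) :
    w - k ∈ strip τ := by
  simpa [strip] using hw

theorem sub_floor_mem_stripBox {τ : ℝ} {w : ℂ} (hw : w ∈ strip τ) :
    w - ⌊w.re⌋ ∈ stripBox τ := by
  refine ⟨sub_intCast_mem_strip hw _, ?_⟩
  simpa [abs_of_nonneg (Int.fract_nonneg w.re)] using Int.fract_lt_one w.re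

theorem abs_arg_one_add_lt {u : ℂ} (hu : ‖u‖ < 1) : |(1 + u).arg| < Real.pi / 2 := by
  rw [Complex.abs_arg_lt_pi_div_two_iff, Complex.add_re, Complex.one_re]
  exact .inl (by linarith [abs_lt.mp ((Complex.abs_re_le_norm u).trans_lt hu)])

theorem exists_holomorphic_disc_to_strip {τ : ℝ} (hτ : 0 < τ) :
    ∃ h : ℂ → ℂ, DifferentiableOn ℂ h (ball 0 1) ∧ MapsTo h (ball 0 1) (strip τ) ∧ h 0 = 0 ∧
      ∀ x : ℝ, ∃ u ∈ ball (0 : ℂ) 1, h u = x := by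
  have hc : 0 < τ / Real.pi := by positivity
  refine ⟨fun u ↦ (τ / Real.pi : ℝ) * (Complex.log (1 + u) - Complex.log (1 - u)),
    fun u hu ↦ ?_, fun u hu ↦ ?_, by simp, fun x ↦ ?_⟩
  · rw [mem_ball_zero_iff] at hu
    have h₁ : 1 + u ∈ Complex.slitPlane := Complex.mem_slitPlane_of_norm_lt_one hu
    have h₂ : 1 - u ∈ Complex.slitPlane := by
      simpa [sub_eq_add_neg] using Complex.mem_slitPlane_of_norm_lt_one (z := -u) (by simpa)
    fun_prop (disch := assumption)
  · rw [mem_ball_zero_iff] at hu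
    have h₁ : |(1 + u).arg| < Real.pi / 2 := abs_arg_one_add_lt hu
    have h₂ : |(1 - u).arg| < Real.pi / 2 := by
      simpa [sub_eq_add_neg] using abs_arg_one_add_lt (u := -u) (by simpa)
    have harg : |(1 + u).arg - (1 - u).arg| < Real.pi := by
      linarith [abs_sub (1 + u).arg (1 - u).arg]
    calc |((τ / Real.pi : ℝ) * (Complex.log (1 + u) - Complex.log (1 - u))).im|
        = τ / Real.pi * |(1 + u).arg - (1 - u).arg| := by
          rw [Complex.im_ofReal_mul, Complex.sub_im, Complex.log_im, Complex.log_im, abs_mul,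
            abs_of_pos hc]
      _ < τ / Real.pi * Real.pi := by gcongr
      _ = τ := div_mul_cancel₀ τ Real.pi_ne_zero
  · obtain ⟨r, hr, hrx⟩ := Real.artanh_surjOn (mem_univ (x / (2 * (τ / Real.pi))))
    refine ⟨r, by simpa [abs_lt] using hr, ?_⟩
    have h₁ : 0 < 1 + r := by linarith [hr.1]
    have h₂ : 0 < 1 - r := by linarith [hr.2]
    rw [Real.artanh_eq_half_log (Ioo_subset_Icc_self hr), Real.log_div h₁.ne' h₂.ne'] at hrx
    have hreal : τ / Real.pi * (Real.log (1 + r) - Real.log (1 - r)) = x := by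
      field_simp at hrx ⊢
      linarith
    rw [← hreal]
    push_cast [Complex.ofReal_log h₁.le, Complex.ofReal_log h₂.le]
    rfl

end DiscStrip

section ShiftSeries

variable {E : Type*} [NormedAddCommGroup E] {κ : ℂ → ℂ} {τ C B : ℝ} {P : ℤ → E}

theorem norm_add_right_le_two_pow (hP : ∀ k, ‖P k‖ ≤ B * 2 ^ k.natAbs) (m k : ℤ) :
    ‖P (k + m)‖ ≤ B * 2 ^ m.natAbs * 2 ^ k.natAbs := by
  have hB : 0 ≤ B := by simpa using (norm_nonneg _).trans (hP 0)
  calc ‖P (k + m)‖ ≤ B * 2 ^ (k + m).natAbs := hP _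
    _ ≤ B * 2 ^ (m.natAbs + k.natAbs) := by
        gcongr
        · norm_num
        · rw [add_comm m.natAbs]; exact Int.natAbs_add_le k m
    _ = B * 2 ^ m.natAbs * 2 ^ k.natAbs := by ring

variable [NormedSpace ℂ E]

/-- The superposition `∑ κ (w - k) P k` of the integer translates of `κ`; its value is meaningful
only where the series converges. -/
noncomputable def shiftSeries (κ : ℂ → ℂ) (P : ℤ → E) (w : ℂ) : E := ∑' k : ℤ, κ (w - k) • P k

/-- A function that is holomorphic on a strip and decays exponentially along it. The decay is
expressed through the integer translates, as this is how it enters the series `shiftSeries`. -/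
structure HasStripDecay (κ : ℂ → ℂ) (τ C : ℝ) : Prop where
  differentiableOn : DifferentiableOn ℂ κ (strip τ)
  norm_le : ∀ w ∈ stripBox τ, ∀ k : ℤ, ‖κ (w - k)‖ ≤ C * (1 / 4) ^ k.natAbs

theorem hasSum_half_pow_natAbs : HasSum (fun k : ℤ ↦ (1 / 2 : ℝ) ^ k.natAbs) 3 := by
  have hneg (n : ℕ) : (-((n : ℤ) + 1)).natAbs = n + 1 := by lia
  rw [show (3 : ℝ) = 2 + 1 by norm_num]
  refine HasSum.of_nat_of_neg_add_one (by simpa using hasSum_geometric_two) ?_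
  simp only [hneg, pow_succ]
  simpa using hasSum_geometric_two.mul_right (1 / 2 : ℝ)

theorem shiftSeries_add_intCast (κ : ℂ → ℂ) (P : ℤ → E) (w : ℂ) (m : ℤ) :
    shiftSeries κ P (w + m) = shiftSeries κ (fun k ↦ P (k + m)) w := by
  rw [shiftSeries, ← (Equiv.addRight m).tsum_eq]
  simp [shiftSeries]

theorem HasStripDecay.norm_smul_le (hκ : HasStripDecay κ τ C) (hP : ∀ k, ‖P k‖ ≤ B * 2 ^ k.natAbs)
    {w : ℂ} (hw : w ∈ stripBox τ) (k : ℤ) :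
    ‖κ (w - k) • P k‖ ≤ C * B * (1 / 2) ^ k.natAbs := by
  have hk := hκ.norm_le w hw k
  calc ‖κ (w - k) • P k‖ = ‖κ (w - k)‖ * ‖P k‖ := norm_smul ..
    _ ≤ C * (1 / 4) ^ k.natAbs * (B * 2 ^ k.natAbs) :=
        mul_le_mul hk (hP k) (norm_nonneg _) ((norm_nonneg _).trans hk)
    _ = C * B * (1 / 4 * 2) ^ k.natAbs := by rw [mul_pow]; ring
    _ = C * B * (1 / 2) ^ k.natAbs := by norm_num

theorem HasStripDecay.norm_shiftSeries_le (hκ : HasStripDecay κ τ C)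
    (hP : ∀ k, ‖P k‖ ≤ B * 2 ^ k.natAbs) {w : ℂ} (hw : w ∈ stripBox τ) :
    ‖shiftSeries κ P w‖ ≤ C * B * 3 :=
  tsum_of_norm_bounded (hasSum_half_pow_natAbs.mul_left _) (hκ.norm_smul_le hP hw)

theorem differentiableOn_strip_of_translates {f : ℂ → E}
    (hf : ∀ m : ℤ, DifferentiableOn ℂ (fun w ↦ f (w + m)) (stripBox τ)) :
    DifferentiableOn ℂ f (strip τ) := by
  intro w hw
  have hbox := sub_floor_mem_stripBox hw
  have hdiff := (hf ⌊w.re⌋).differentiableAt ((isOpen_stripBox τ).mem_nhds hbox)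
  have hcomp := hdiff.comp w (differentiableAt_id.sub_const (⌊w.re⌋ : ℂ))
  simpa [comp_def] using hcomp.differentiableWithinAt (s := strip τ)

variable [CompleteSpace E]

theorem HasStripDecay.hasSum_shiftSeries (hκ : HasStripDecay κ τ C)
    (hP : ∀ k, ‖P k‖ ≤ B * 2 ^ k.natAbs) {w : ℂ} (hw : w ∈ stripBox τ) :
    HasSum (fun k : ℤ ↦ κ (w - k) • P k) (shiftSeries κ P w) :=
  (Summable.of_norm_bounded (hasSum_half_pow_natAbs.summable.mul_left _)
    (hκ.norm_smul_le hP hw)).hasSum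

theorem HasStripDecay.differentiableOn_shiftSeries (hκ : HasStripDecay κ τ C)
    (hP : ∀ k, ‖P k‖ ≤ B * 2 ^ k.natAbs) : DifferentiableOn ℂ (shiftSeries κ P) (strip τ) := by
  refine differentiableOn_strip_of_translates fun m ↦ ?_
  simp only [shiftSeries_add_intCast]
  have hterm (k : ℤ) : DifferentiableOn ℂ (fun w ↦ κ (w - k) • P (k + m)) (stripBox τ) :=
    (hκ.differentiableOn.comp (differentiableOn_id.sub_const _) fun w hw ↦
      sub_intCast_mem_strip (stripBox_subset_strip τ hw) k).smul_const _
  exact Complex.differentiableOn_tsum_of_summable_norm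
    (hasSum_half_pow_natAbs.summable.mul_left _) hterm (isOpen_stripBox τ)
    fun k w hw ↦ hκ.norm_smul_le (norm_add_right_le_two_pow hP m) hw k

end ShiftSeries

section PeriodicOnStrip

variable {E : Type*} [NormedAddCommGroup E]

theorem exists_le_norm_of_isCompact {X : Type*} [PseudoMetricSpace X] {f : X → E} {K U : Set X}
    (hK : IsCompact K) (hU : IsOpen U) (hKU : K ⊆ U) (hf : ContinuousOn f U)
    (hne : ∀ x ∈ K, f x ≠ 0) :
    ∃ σ c : ℝ, 0 < σ ∧ 0 < c ∧ ∀ x ∈ thickening σ K, c ≤ ‖f x‖ := by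
  obtain rfl | hK₀ := K.eq_empty_or_nonempty
  · exact ⟨1, 1, one_pos, one_pos, by simp⟩
  obtain ⟨x₀, hx₀, hmin⟩ := hK.exists_isMinOn hK₀ (hf.norm.mono hKU)
  have hpos : 0 < ‖f x₀‖ := norm_pos_iff.mpr (hne x₀ hx₀)
  obtain ⟨σ, hσ, hsub⟩ := hK.exists_thickening_subset_open
    (hf.norm.isOpen_inter_preimage hU (isOpen_Ioi (a := ‖f x₀‖ / 2)))
    fun x hx ↦ ⟨hKU hx, (half_lt_self hpos).trans_le (hmin hx)⟩
  exact ⟨σ, ‖f x₀‖ / 2, hσ, half_pos hpos, fun x hx ↦ (hsub hx).2.le⟩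

theorem sub_floor_mem_thickening {τ : ℝ} {w : ℂ} (hw : w ∈ strip τ) :
    w - ⌊w.re⌋ ∈ thickening τ (Complex.ofReal '' Icc 0 1) := by
  refine mem_thickening_iff.mpr ⟨(Int.fract w.re : ℝ), mem_image_of_mem _
    ⟨Int.fract_nonneg _, (Int.fract_lt_one _).le⟩, ?_⟩
  rw [Complex.dist_of_re_eq (by simp)]
  simpa [strip, Real.dist_eq] using hw

theorem exists_le_norm_of_periodic_of_ne_zero {f : ℂ → E} {τ : ℝ} (hτ : 0 < τ)
    (hf : ContinuousOn f (strip τ)) (hper : Periodic f 1) (hne : ∀ x : ℝ, f x ≠ 0) :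
    ∃ σ c : ℝ, 0 < σ ∧ σ ≤ τ ∧ 0 < c ∧ ∀ w ∈ strip σ, c ≤ ‖f w‖ := by
  have hsub : Complex.ofReal '' Icc 0 1 ⊆ strip τ :=
    image_subset_iff.mpr fun x _ ↦ by simpa [strip] using hτ
  obtain ⟨σ, c, hσ, hc, hle⟩ := exists_le_norm_of_isCompact
    (isCompact_Icc.image Complex.continuous_ofReal) (isOpen_strip τ) hsub hf
    (forall_mem_image.mpr fun x _ ↦ hne x)
  refine ⟨min σ τ, c, lt_min hσ hτ, min_le_right _ _, hc, fun w hw ↦ ?_⟩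
  have hfloor : f (w - ⌊w.re⌋) = f w := by simpa using hper.sub_int_mul_eq ⌊w.re⌋ (x := w)
  exact hfloor ▸ hle _ (sub_floor_mem_thickening (strip_subset_strip (min_le_left _ _) hw))

end PeriodicOnStrip

section CardinalKernel

variable {E : Type*} [NormedAddCommGroup E] [NormedSpace ℂ E] {κ : ℂ → ℂ} {τ C B : ℝ} {P : ℤ → E}

/-- A kernel for cardinal interpolation: its integer translates form a holomorphic partition of
unity on a strip, and the `k`-th one takes the value `1` at `k` and `0` at all other integers. -/
structure IsCardinalKernel (κ : ℂ → ℂ) (τ C : ℝ) : Prop extends HasStripDecay κ τ C where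
  map_zero : κ 0 = 1
  map_intCast : ∀ k : ℤ, k ≠ 0 → κ k = 0
  hasSum_one : ∀ w ∈ stripBox τ, HasSum (fun k : ℤ ↦ κ (w - k)) 1

theorem shiftSeries_intCast (h₀ : κ 0 = 1) (h : ∀ k : ℤ, k ≠ 0 → κ k = 0) (P : ℤ → E) (m : ℤ) :
    shiftSeries κ P m = P m := by
  have hzero (k : ℤ) (hk : k ≠ m) : κ (m - k) • P k = 0 := by
    rw [← Int.cast_sub, h _ (sub_ne_zero.mpr hk.symm), zero_smul]
  rw [shiftSeries, tsum_eq_single m hzero, sub_self, h₀, one_smul]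

theorem IsCardinalKernel.one_le (hκ : IsCardinalKernel κ τ C) (hτ : 0 < τ) : 1 ≤ C := by
  simpa [hκ.map_zero] using hκ.norm_le 0 (by simp [stripBox, strip, hτ]) 0

theorem IsCardinalKernel.norm_shiftSeries_sub_le [CompleteSpace E] (hκ : IsCardinalKernel κ τ C)
    (hP : ∀ k, ‖P k - P 0‖ ≤ B * 2 ^ k.natAbs) {w : ℂ} (hw : w ∈ stripBox τ) :
    ‖shiftSeries κ P w - P 0‖ ≤ C * B * 3 := by
  have hsum : HasSum (fun k : ℤ ↦ κ (w - k) • P k)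
      (shiftSeries κ (fun k ↦ P k - P 0) w + P 0) := by
    simpa [smul_sub] using
      (hκ.hasSum_shiftSeries hP hw).add ((hκ.hasSum_one w hw).smul_const (P 0))
  rw [shiftSeries, hsum.tsum_eq, add_sub_cancel_right]
  exact hκ.norm_shiftSeries_le hP hw

end CardinalKernel

section GaussSinc

/-- The kernel `exp (-z ^ 2) * (sin (π z) / (π z)) ^ 2`. The square makes it nonnegative on the
real axis, and the Gaussian factor makes it decay faster than every exponential along strips. -/
noncomputable def gaussSinc (z : ℂ) : ℂ := Complex.exp (-z ^ 2) * complexSinc (Real.pi * z) ^ 2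

theorem gaussSinc_ofReal (x : ℝ) :
    gaussSinc x = (Real.exp (-x ^ 2) * Real.sinc (Real.pi * x) ^ 2 : ℝ) := by
  rw [gaussSinc, ← Complex.ofReal_mul, complexSinc_ofReal]
  push_cast
  rfl

theorem gaussSinc_zero : gaussSinc 0 = 1 := by
  simp [gaussSinc, complexSinc_zero]

theorem gaussSinc_intCast {k : ℤ} (hk : k ≠ 0) : gaussSinc k = 0 := by
  simpa [sinc_pi_mul_intCast hk] using gaussSinc_ofReal k

theorem exp_one_sub_sq_le {x : ℝ} {n : ℕ} (h : n - 1 ≤ |x|) :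
    Real.exp (1 - x ^ 2) ≤ Real.exp 4 * (1 / 4) ^ n := by
  have hquarter : Real.exp (-2) ≤ 1 / 4 := by
    rw [Real.exp_neg, one_div, show (2 : ℝ) = 1 + 1 by norm_num, Real.exp_add]
    gcongr
    nlinarith [Real.add_one_le_exp 1]
  calc Real.exp (1 - x ^ 2) ≤ Real.exp (4 + n * (-2)) := by
        gcongr
        nlinarith [sq_nonneg (|x| - 1), sq_abs x]
    _ = Real.exp 4 * Real.exp (-2) ^ n := by rw [Real.exp_add, Real.exp_nat_mul]
    _ ≤ Real.exp 4 * (1 / 4) ^ n := by gcongr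

theorem norm_gaussSinc_le {z : ℂ} (hz : |z.im| ≤ 1) :
    ‖gaussSinc z‖ ≤ Real.exp (1 - z.re ^ 2) * Real.exp Real.pi ^ 2 := by
  rw [gaussSinc, norm_mul, norm_pow, Complex.norm_exp]
  gcongr
  · have hre : (-z ^ 2).re = z.im ^ 2 - z.re ^ 2 := by simp [sq]
    have him : z.im ^ 2 ≤ 1 := (sq_le_one_iff_abs_le_one _).mpr hz
    linarith
  · refine (norm_complexSinc_le_exp_abs_im _).trans (Real.exp_le_exp.mpr ?_)
    rw [Complex.im_ofReal_mul, abs_mul, abs_of_pos Real.pi_pos]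
    exact mul_le_of_le_one_right Real.pi_pos.le hz

theorem hasStripDecay_gaussSinc :
    HasStripDecay gaussSinc 1 (Real.exp 4 * Real.exp Real.pi ^ 2) where
  differentiableOn := by
    have := differentiable_complexSinc
    unfold gaussSinc
    fun_prop
  norm_le w hw k := by
    have hre : (k.natAbs : ℝ) - 1 ≤ |(w - k).re| := by
      have := abs_sub_abs_le_abs_sub (k : ℝ) w.re
      rw [abs_sub_comm] at this
      rw [Nat.cast_natAbs, Int.cast_abs, Complex.sub_re, Complex.intCast_re]
      linarith [hw.2]
    calc ‖gaussSinc (w - k)‖ ≤ Real.exp (1 - (w - k).re ^ 2) * Real.exp Real.pi ^ 2 :=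
          norm_gaussSinc_le (sub_intCast_mem_strip hw.1 k).le
      _ ≤ Real.exp 4 * (1 / 4) ^ k.natAbs * Real.exp Real.pi ^ 2 := by
          gcongr
          exact exp_one_sub_sq_le hre
      _ = Real.exp 4 * Real.exp Real.pi ^ 2 * (1 / 4) ^ k.natAbs := by ring

/-- The `1`-periodic sum of the integer translates of `gaussSinc`, by which the kernel is
normalised. -/
noncomputable def gaussSincSum : ℂ → ℂ := shiftSeries gaussSinc fun _ ↦ 1

theorem one_le_one_mul_two_pow (k : ℤ) : ‖(1 : ℂ)‖ ≤ 1 * 2 ^ k.natAbs := by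
  simpa using one_le_pow₀ one_le_two

theorem hasSum_gaussSincSum {w : ℂ} (hw : w ∈ stripBox 1) :
    HasSum (fun k : ℤ ↦ gaussSinc (w - k)) (gaussSincSum w) := by
  simpa [gaussSincSum] using hasStripDecay_gaussSinc.hasSum_shiftSeries one_le_one_mul_two_pow hw

theorem differentiableOn_gaussSincSum : DifferentiableOn ℂ gaussSincSum (strip 1) :=
  hasStripDecay_gaussSinc.differentiableOn_shiftSeries one_le_one_mul_two_pow

theorem periodic_gaussSincSum : Periodic gaussSincSum 1 := fun w ↦ by
  simpa [gaussSincSum] using shiftSeries_add_intCast gaussSinc (fun _ ↦ (1 : ℂ)) w 1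

theorem gaussSincSum_sub_intCast (w : ℂ) (k : ℤ) : gaussSincSum (w - k) = gaussSincSum w := by
  simpa using periodic_gaussSincSum.sub_int_mul_eq k (x := w)

theorem re_gaussSincSum_pos {x : ℝ} (hx : |x| < 1) : 0 < (gaussSincSum x).re := by
  have hterm (k : ℤ) : (gaussSinc (x - k)).re =
      Real.exp (-(x - k) ^ 2) * Real.sinc (Real.pi * (x - k)) ^ 2 := by
    rw [← Complex.ofReal_intCast, ← Complex.ofReal_sub, gaussSinc_ofReal, Complex.ofReal_re]
  have hx' : (x : ℂ) ∈ stripBox 1 := by simpa [stripBox, strip] using hx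
  have hsum := Complex.hasSum_re (hasSum_gaussSincSum hx')
  simp only [hterm] at hsum
  rw [← hsum.tsum_eq]
  refine hsum.summable.tsum_pos (fun k ↦ by positivity) (round x) ?_
  have hround : |Real.pi * (x - round x)| < Real.pi := by
    rw [abs_mul, abs_of_pos Real.pi_pos]
    nlinarith [abs_sub_round x, Real.pi_pos]
  have := sinc_ne_zero_of_abs_lt_pi hround
  positivity

theorem gaussSincSum_ofReal_ne_zero (x : ℝ) : gaussSincSum x ≠ 0 := by
  have hfract : |Int.fract x| < 1 := by
    simpa [abs_of_nonneg (Int.fract_nonneg x)] using Int.fract_lt_one x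
  rw [← gaussSincSum_sub_intCast x ⌊x⌋, ← Complex.ofReal_intCast, ← Complex.ofReal_sub]
  exact fun h ↦ (re_gaussSincSum_pos hfract).ne' (congrArg Complex.re h)

theorem gaussSincSum_zero : gaussSincSum 0 = 1 := by
  simpa [gaussSincSum] using
    shiftSeries_intCast gaussSinc_zero (fun _ ↦ gaussSinc_intCast) (fun _ ↦ (1 : ℂ)) 0

theorem exists_isCardinalKernel : ∃ (κ : ℂ → ℂ) (τ C : ℝ), 0 < τ ∧ IsCardinalKernel κ τ C := by
  obtain ⟨τ, c, hτ, hτ₁, hc, hle⟩ := exists_le_norm_of_periodic_of_ne_zero one_pos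
    differentiableOn_gaussSincSum.continuousOn periodic_gaussSincSum gaussSincSum_ofReal_ne_zero
  have hne (w : ℂ) (hw : w ∈ strip τ) : gaussSincSum w ≠ 0 :=
    norm_pos_iff.mp (hc.trans_le (hle w hw))
  refine ⟨fun w ↦ gaussSinc w / gaussSincSum w, τ, Real.exp 4 * Real.exp Real.pi ^ 2 / c, hτ, ?_⟩
  constructor
  · constructor
    · exact (hasStripDecay_gaussSinc.differentiableOn.mono (strip_subset_strip hτ₁)).div
        (differentiableOn_gaussSincSum.mono (strip_subset_strip hτ₁)) hne
    · intro w hw k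
      have hbound := hasStripDecay_gaussSinc.norm_le w (stripBox_subset_stripBox hτ₁ hw) k
      rw [gaussSincSum_sub_intCast, norm_div, div_mul_eq_mul_div]
      exact div_le_div₀ ((norm_nonneg _).trans hbound) hbound hc (hle w hw.1)
  · simp [gaussSinc_zero, gaussSincSum_zero]
  · intro k hk
    simp [gaussSinc_intCast hk]
  · intro w hw
    simpa only [gaussSincSum_sub_intCast, div_self (hne w hw.1)] using
      (hasSum_gaussSincSum (stripBox_subset_stripBox hτ₁ hw)).div_const (gaussSincSum w)

end GaussSinc

section Interpolation

variable {E : Type*} [NormedAddCommGroup E] [NormedSpace ℂ E] [CompleteSpace E]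
  {κ : ℂ → ℂ} {τ C : ℝ}

theorem IsCardinalKernel.dist_shiftSeries_floor_le (hκ : IsCardinalKernel κ τ C) {P : ℤ → E}
    {r : ℤ → ℝ} (hP : ∀ m k, dist (P (k + m)) (P m) ≤ r m * 2 ^ k.natAbs) {w : ℂ}
    (hw : w ∈ strip τ) : dist (shiftSeries κ P w) (P ⌊w.re⌋) ≤ C * r ⌊w.re⌋ * 3 := by
  have h := hκ.norm_shiftSeries_sub_le (P := fun k ↦ P (k + ⌊w.re⌋)) (B := r ⌊w.re⌋)
    (by simpa [dist_eq_norm] using hP ⌊w.re⌋) (sub_floor_mem_stripBox hw)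
  rwa [← shiftSeries_add_intCast, sub_add_cancel, zero_add, ← dist_eq_norm] at h

theorem IsCardinalKernel.exists_holomorphic_strip_through (hκ : IsCardinalKernel κ τ C)
    (hτ : 0 < τ) {D : Set E} (hD : IsOpen D) (hconn : IsPreconnected D) {b : ℕ → E}
    (hb : ∀ j, b j ∈ D) :
    ∃ f : ℂ → E, DifferentiableOn ℂ f (strip τ) ∧ MapsTo f (strip τ) D ∧ f 0 = b 0 ∧
      ∀ j, ∃ k : ℤ, f k = b j := by
  have hC : 1 ≤ C := hκ.one_le hτ
  have hη₁ : 1 / (4 * C) ≤ 1 := (div_le_one (by positivity)).mpr (by linarith)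
  obtain ⟨P, r, hP₀, hr, hball, hgrowth, hvisit⟩ :=
    exists_int_seq_visiting hD hconn (η := 1 / (4 * C)) (by positivity) hη₁ hb
  have map_int := shiftSeries_intCast hκ.map_zero hκ.map_intCast P
  refine ⟨shiftSeries κ P, ?_, fun w hw ↦ hball ⌊w.re⌋ ?_, ?_, fun j ↦ ?_⟩
  · refine hκ.differentiableOn_shiftSeries (B := ‖P 0‖ + 1 / (4 * C) * r 0) fun k ↦ ?_
    have hk : dist (P k) (P 0) ≤ 1 / (4 * C) * r 0 * 2 ^ k.natAbs := by simpa using hgrowth 0 k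
    calc ‖P k‖ ≤ ‖P 0‖ + dist (P k) (P 0) := by
          rw [dist_eq_norm]; exact norm_le_norm_add_norm_sub' _ _
      _ ≤ ‖P 0‖ * 2 ^ k.natAbs + 1 / (4 * C) * r 0 * 2 ^ k.natAbs := by
          gcongr
          exact le_mul_of_one_le_right (norm_nonneg _) (one_le_pow₀ one_le_two)
      _ = (‖P 0‖ + 1 / (4 * C) * r 0) * 2 ^ k.natAbs := by ring
  · calc dist (shiftSeries κ P w) (P ⌊w.re⌋)
        ≤ C * (1 / (4 * C) * r ⌊w.re⌋) * 3 :=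
          hκ.dist_shiftSeries_floor_le (r := fun m ↦ 1 / (4 * C) * r m) hgrowth hw
      _ = 3 / 4 * r ⌊w.re⌋ := by field_simp
      _ < r ⌊w.re⌋ := by linarith [hr ⌊w.re⌋]
  · simpa [hP₀] using map_int 0
  · obtain ⟨k, hk⟩ := hvisit j
    exact ⟨k, (map_int k).trans hk⟩

end Interpolation

theorem exists_analytic_disc_through_countable_general {E : Type*} [NormedAddCommGroup E]
    [NormedSpace ℂ E] [CompleteSpace E] {D : Set E} (hD : IsOpen D) (hconn : IsPreconnected D)
    {z : E} (hz : z ∈ D) {a : ℕ → E} (ha : ∀ j, a j ∈ D) :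
    ∃ (φ : ℂ → E) (lam : ℕ → ℂ),
      DifferentiableOn ℂ φ (ball 0 1) ∧ MapsTo φ (ball 0 1) D ∧ φ 0 = z ∧
      ∀ j, lam j ∈ ball (0 : ℂ) 1 ∧ φ (lam j) = a j := by
  obtain ⟨κ, τ, C, hτ, hκ⟩ := exists_isCardinalKernel
  let b : ℕ → E
    | 0 => z
    | j + 1 => a j
  have hb : ∀ j, b j ∈ D
    | 0 => hz
    | j + 1 => ha j
  obtain ⟨f, hf, hfD, hf₀, hvisit⟩ := hκ.exists_holomorphic_strip_through hτ hD hconn hb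
  obtain ⟨h, hh, hstrip, hh₀, hreal⟩ := exists_holomorphic_disc_to_strip hτ
  choose k hk using fun j ↦ hvisit (j + 1)
  choose lam hlam hhlam using fun j ↦ hreal (k j)
  refine ⟨f ∘ h, lam, hf.comp hh hstrip, hfD.comp hstrip, ?_, fun j ↦ ⟨hlam j, ?_⟩⟩
  · exact (congrArg f hh₀).trans hf₀
  · exact (congrArg f (hhlam j)).trans (by exact_mod_cast hk j)

/-- Given a domain `D ⊆ ℂⁿ`, a point `z ∈ D` and a countable sequence of points
`a j ∈ D`, there exist an analytic disc `φ : 𝔻 → D` and points `λ j ∈ 𝔻` with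
`φ 0 = z` and `φ (λ j) = a j` for all `j`; in particular the set of competitors
in the definition of the Lempert function with countably many poles is nonempty. -/
theorem exists_analytic_disc_through_countable {n : ℕ} (D : Set (Fin n → ℂ))
    (hDopen : IsOpen D) (hDconn : IsConnected D)
    (z : Fin n → ℂ) (hz : z ∈ D)
    (a : ℕ → Fin n → ℂ) (ha : ∀ j, a j ∈ D) :
    ∃ (φ : ℂ → Fin n → ℂ) (lam : ℕ → ℂ),
      DifferentiableOn ℂ φ (ball 0 1) ∧ MapsTo φ (ball 0 1) D ∧ φ 0 = z ∧
      ∀ j, lam j ∈ ball (0 : ℂ) 1 ∧ φ (lam j) = a j :=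
  exists_analytic_disc_through_countable_general hDopen hDconn.isPreconnected hz ha
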